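/- (Deterministic core of the high-probability OMD regret bound.) Let T ≥ 1, let η₁, …, η_{T+1} > 0, let w₁, …, w_{T+1} > 0, and suppose β_i := (η_{i+1}·w_i)/(η_i·w_{i+1}) ∈ (0, 1] for every i ∈ [T]. Let θ₁ = (1/A, …, 1/A) be the uniform distribution, and for i = 1, …, T define recursively: θ̃_{i+1}(a) = θ_i(a)·exp(−η_i·l̂_i(a)); θ'_{i+1} is a minimizer of u ↦ D_F(u, θ̃_{i+1}) over Δ(A); and θ_{i+1} = β_i·θ'_{i+1} + (1 − β_i)·θ₁. Assume each l̂_i ∈ ℝ^A has nonnegative entries, is supported on a single coordinate a_i, and satisfies θ_i(a_i)·l̂_i(a_i) ≤ 1. Then for every θ ∈ Δ(A) and every t ∈ [T]: Σ_{i=1}^t w_i·⟨θ_i − θ, l̂_i⟩ ≤ (w_{t+1}·log A)/η_{t+1} + (1/2)·Σ_{i=1}^t η_i·w_i·Σ_a l̂_i(a). -/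

import Mathlib

open Finset Real

/-- The Bregman divergence of the unnormalized negentropy regularizer
`F(θ) = Σ_a (θ a * log (θ a) - θ a)`, namely
`D_F(u,v) = Σ_a u a * log (u a / v a) - Σ_a u a + Σ_a v a`
(extended to nonnegative `u` by the convention `0 * log 0 = 0`,
which holds automatically since `Real.log 0 = 0`). -/
noncomputable def DF {A : ℕ} (u v : Fin A → ℝ) : ℝ :=
  (∑ a, u a * Real.log (u a / v a)) - (∑ a, u a) + ∑ a, v a

/-- The probability simplex `Δ(A)`. -/
def simplex (A : ℕ) : Set (Fin A → ℝ) :=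
  {θ | (∀ a, 0 ≤ θ a) ∧ (∑ a, θ a) = 1}

/-!
The potential `Φ i = w i / η i * (DF θs (θ 1) - DF θs (θ i))` grows by at least the regret of round
`i`, up to the second-order term. The exponential-weights update followed by the entropic projection
decreases `DF θs` by `η i` times the regret, up to the error of the quadratic bound on
`exp (-x)`. Convexity of `DF θs` shows that mixing in `θ 1` shrinks `DF θs (θ 1) - DF θs ·` by at
most the factor `β i`, which the increase of `w / η` compensates exactly. The sum
telescopes to `Φ (t + 1)`, and `DF θs (θ 1) ≤ log A` when `θ 1` is uniform.
-/

lemma exp_neg_le_quadratic_of_nonneg {x : ℝ} (hx : 0 ≤ x) : exp (-x) ≤ 1 - x + x ^ 2 / 2 := by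
  have hpos : 0 < 1 - x + x ^ 2 / 2 := by nlinarith [sq_nonneg (x - 1)]
  rw [exp_neg, inv_le_iff_one_le_mul₀ (exp_pos x)]
  calc 1 ≤ (1 - x + x ^ 2 / 2) * (1 + x + x ^ 2 / 2) := by nlinarith [sq_nonneg (x ^ 2)]
    _ ≤ (1 - x + x ^ 2 / 2) * exp x := by gcongr; exact quadratic_le_exp_of_nonneg hx

section Simplex

variable {A : ℕ} {u v : Fin A → ℝ}

/-- The relative interior of `Δ(A)`: the distributions of full support. The iterates of mirror
descent stay in it, so that no logarithm takes a junk value. -/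
def openSimplex (A : ℕ) : Set (Fin A → ℝ) :=
  {θ | (∀ a, 0 < θ a) ∧ ∑ a, θ a = 1}

/-- The entropic projection of a positive vector `v` onto `Δ(A)`, i.e. the minimizer of `DF · v`,
encoded by its closed form: `v` divided by its total mass. -/
noncomputable def entropicProj (v : Fin A → ℝ) : Fin A → ℝ :=
  fun a => v a / ∑ b, v b

/-- The exponential-weights update of `x` against the loss `l` with learning rate `η`, before
normalization. -/
noncomputable def expWeights (η : ℝ) (l x : Fin A → ℝ) : Fin A → ℝ :=
  fun a => x a * exp (-η * l a)

lemma openSimplex_subset_simplex : openSimplex A ⊆ simplex A :=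
  fun _ h => ⟨fun a => (h.1 a).le, h.2⟩

lemma convex_openSimplex : Convex ℝ (openSimplex A) := by
  intro p hp q hq c d hc hd hcd
  refine ⟨fun a => ?_, ?_⟩
  · exact convex_Ioi (0 : ℝ) (hp.1 a) (hq.1 a) hc hd hcd
  · simp [sum_add_distrib, ← mul_sum, hp.2, hq.2, hcd]

lemma le_one_of_mem_simplex (hu : u ∈ simplex A) (a : Fin A) : u a ≤ 1 :=
  hu.2 ▸ single_le_sum (fun b _ => hu.1 b) (mem_univ a)

lemma nonempty_of_mem_simplex (hu : u ∈ simplex A) : Nonempty (Fin A) := by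
  by_contra hempty
  rw [not_nonempty_iff] at hempty
  simpa using hu.2

lemma uniform_mem_openSimplex (hA : A ≠ 0) : (fun _ : Fin A => 1 / (A : ℝ)) ∈ openSimplex A :=
  ⟨fun _ => by positivity, by simp [hA]⟩

lemma entropicProj_mem_openSimplex [Nonempty (Fin A)] (hv : ∀ a, 0 < v a) :
    entropicProj v ∈ openSimplex A := by
  have hmass : 0 < ∑ b, v b := sum_pos (fun b _ => hv b) univ_nonempty
  refine ⟨fun a => div_pos (hv a) hmass, ?_⟩
  simp only [entropicProj]
  rw [← sum_div, div_self hmass.ne']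

end Simplex

section Divergence

variable {A : ℕ} {u v : Fin A → ℝ}

lemma DF_eq_sum_mul_klFun (hv : ∀ a, v a ≠ 0) :
    DF u v = ∑ a, v a * InformationTheory.klFun (u a / v a) := by
  rw [DF, ← sum_sub_distrib, ← sum_add_distrib]
  refine sum_congr rfl fun a _ => ?_
  have := hv a
  rw [InformationTheory.klFun_apply]
  field_simp
  ring

lemma DF_nonneg (hu : ∀ a, 0 ≤ u a) (hv : ∀ a, 0 < v a) : 0 ≤ DF u v := by
  rw [DF_eq_sum_mul_klFun fun a => (hv a).ne']
  exact sum_nonneg fun a _ =>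
    mul_nonneg (hv a).le (InformationTheory.klFun_nonneg (div_nonneg (hu a) (hv a).le))

lemma DF_eq_zero_iff (hu : ∀ a, 0 ≤ u a) (hv : ∀ a, 0 < v a) : DF u v = 0 ↔ u = v := by
  have hratio (a) : 0 ≤ u a / v a := div_nonneg (hu a) (hv a).le
  rw [DF_eq_sum_mul_klFun fun a => (hv a).ne', sum_eq_zero_iff_of_nonneg fun a _ =>
    mul_nonneg (hv a).le (InformationTheory.klFun_nonneg (hratio a)), funext_iff]
  simp [(hv _).ne', InformationTheory.klFun_eq_zero_iff (hratio _), div_eq_one_iff_eq]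

lemma convexOn_DF_right (hu : ∀ a, 0 ≤ u a) : ConvexOn ℝ {v | ∀ a, 0 < v a} (DF u) := by
  have hconvex : Convex ℝ {v : Fin A → ℝ | ∀ a, 0 < v a} := fun p hp q hq c d hc hd hcd a =>
    convex_Ioi (0 : ℝ) (hp a) (hq a) hc hd hcd
  have hDF {v : Fin A → ℝ} (hv : ∀ a, 0 < v a) :
      DF u v = ∑ a, (u a * log (u a) - u a + v a - u a * log (v a)) := by
    rw [DF, ← sum_sub_distrib, ← sum_add_distrib]
    refine sum_congr rfl fun a _ => ?_
    rcases eq_or_ne (u a) 0 with hua | hua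
    · simp [hua]
    · rw [log_div hua (hv a).ne']
      ring
  refine ⟨hconvex, fun p hp q hq c d hc hd hcd => ?_⟩
  rw [hDF hp, hDF hq, hDF (hconvex hp hq hc hd hcd), smul_eq_mul, smul_eq_mul, mul_sum, mul_sum,
    ← sum_add_distrib]
  refine sum_le_sum fun a _ => ?_
  have hlog : c * log (p a) + d * log (q a) ≤ log (c * p a + d * q a) :=
    strictConcaveOn_log_Ioi.concaveOn.2 (hp a) (hq a) hc hd hcd
  obtain rfl : d = 1 - c := by linarith
  simp only [Pi.add_apply, Pi.smul_apply, smul_eq_mul]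
  linarith [mul_le_mul_of_nonneg_left hlog (hu a)]

lemma DF_mul_exp (hv : ∀ a, v a ≠ 0) (f : Fin A → ℝ) :
    DF u (fun a => v a * exp (f a)) =
      DF u v - ∑ a, u a * f a + (∑ a, v a * exp (f a) - ∑ a, v a) := by
  have hterm (a) : u a * log (u a / (v a * exp (f a))) = u a * log (u a / v a) - u a * f a := by
    rcases eq_or_ne (u a) 0 with hua | hua
    · simp [hua]
    · rw [← div_div, log_div (div_ne_zero hua (hv a)) (exp_ne_zero _), log_exp, mul_sub]
  simp only [DF, hterm, sum_sub_distrib]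
  ring

lemma DF_uniform_le_log (hu : u ∈ simplex A) : DF u (fun _ => 1 / (A : ℝ)) ≤ log A := by
  have := nonempty_of_mem_simplex hu
  have hA : A ≠ 0 := Fin.pos_iff_nonempty.2 this |>.ne'
  have hterm (a) : u a * log (u a / (1 / A)) ≤ u a * log A := by
    rcases (hu.1 a).eq_or_lt with hua | hua
    · simp [← hua]
    · gcongr
      simpa using mul_le_mul_of_nonneg_right (le_one_of_mem_simplex hu a) A.cast_nonneg
  calc DF u (fun _ => 1 / (A : ℝ)) = ∑ a, u a * log (u a / (1 / A)) := by
        rw [DF, hu.2, (uniform_mem_openSimplex hA).2, sub_add_cancel]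
    _ ≤ ∑ a, u a * log A := sum_le_sum fun a _ => hterm a
    _ = log A := by rw [← sum_mul, hu.2, one_mul]

end Divergence

section Projection

variable {A : ℕ} {u v : Fin A → ℝ}

lemma DF_eq_DF_entropicProj_add (hu : u ∈ simplex A) (hv : ∀ a, 0 < v a) :
    DF u v = DF u (entropicProj v) + (∑ a, v a - 1 - log (∑ a, v a)) := by
  have := nonempty_of_mem_simplex hu
  have hmass : 0 < ∑ b, v b := sum_pos (fun b _ => hv b) univ_nonempty
  have hproj : entropicProj v = fun a => v a * exp (-log (∑ b, v b)) := by
    ext a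
    rw [exp_neg, exp_log hmass, entropicProj, div_eq_mul_inv]
  have hsum : ∑ a, v a * exp (-log (∑ b, v b)) = 1 := by
    simpa only [hproj] using (entropicProj_mem_openSimplex hv).2
  rw [hproj, DF_mul_exp fun a => (hv a).ne', hsum, ← sum_mul, hu.2]
  ring

lemma DF_entropicProj_le (hu : u ∈ simplex A) (hv : ∀ a, 0 < v a) :
    DF u (entropicProj v) ≤ DF u v := by
  have := nonempty_of_mem_simplex hu
  have hlog := log_le_sub_one_of_pos (sum_pos (fun a _ => hv a) univ_nonempty)
  linarith [DF_eq_DF_entropicProj_add hu hv]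

lemma eq_entropicProj_of_isMinOn (hv : ∀ a, 0 < v a) (hu : u ∈ simplex A)
    (hmin : IsMinOn (fun p => DF p v) (simplex A) u) : u = entropicProj v := by
  have := nonempty_of_mem_simplex hu
  have hproj := entropicProj_mem_openSimplex hv
  have hproj' := openSimplex_subset_simplex hproj
  have hself : DF (entropicProj v) (entropicProj v) = 0 :=
    (DF_eq_zero_iff hproj'.1 hproj.1).2 rfl
  have hle : DF u v ≤ DF (entropicProj v) v := hmin hproj'
  refine (DF_eq_zero_iff hu.1 hproj.1).1 (le_antisymm ?_ (DF_nonneg hu.1 hproj.1))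
  linarith [DF_eq_DF_entropicProj_add hu hv, DF_eq_DF_entropicProj_add hproj' hv]

end Projection

section MirrorDescent

variable {A : ℕ} {η : ℝ} {l x p s : Fin A → ℝ}

lemma expWeights_pos (hx : ∀ a, 0 < x a) (a : Fin A) : 0 < expWeights η l x a :=
  mul_pos (hx a) (exp_pos _)

lemma sum_expWeights_le (hη : 0 ≤ η) (hl : ∀ a, 0 ≤ l a) (hx : ∀ a, 0 ≤ x a)
    (hxl : ∀ a, x a * l a ≤ 1) :
    ∑ a, expWeights η l x a ≤ ∑ a, x a - η * ∑ a, x a * l a + η ^ 2 / 2 * ∑ a, l a := by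
  rw [mul_sum, mul_sum, ← sum_sub_distrib, ← sum_add_distrib]
  refine sum_le_sum fun a _ => ?_
  calc x a * exp (-η * l a) ≤ x a * (1 - η * l a + (η * l a) ^ 2 / 2) := by
        rw [neg_mul]
        exact mul_le_mul_of_nonneg_left
          (exp_neg_le_quadratic_of_nonneg (mul_nonneg hη (hl a))) (hx a)
    _ = x a - η * (x a * l a) + η ^ 2 / 2 * (x a * l a * l a) := by ring
    _ ≤ x a - η * (x a * l a) + η ^ 2 / 2 * l a := by
        gcongr
        exact mul_le_of_le_one_left (hl a) (hxl a)

lemma DF_expWeights (hx : ∀ a, x a ≠ 0) :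
    DF s (expWeights η l x) =
      DF s x + η * ∑ a, s a * l a + (∑ a, expWeights η l x a - ∑ a, x a) := by
  unfold expWeights
  rw [DF_mul_exp hx]
  simp only [mul_left_comm (s _), ← mul_sum]
  ring

lemma mul_regret_le_DF_sub_DF_entropicProj (hη : 0 ≤ η) (hl : ∀ a, 0 ≤ l a)
    (hx : x ∈ openSimplex A) (hxl : ∀ a, x a * l a ≤ 1) (hs : s ∈ simplex A) :
    η * ∑ a, (x a - s a) * l a ≤
      DF s x - DF s (entropicProj (expWeights η l x)) + η ^ 2 / 2 * ∑ a, l a := by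
  have hproj := DF_entropicProj_le hs (expWeights_pos (η := η) (l := l) hx.1)
  have hupdate := DF_expWeights (η := η) (l := l) (s := s) fun a => (hx.1 a).ne'
  have hmass := sum_expWeights_le hη hl (fun a => (hx.1 a).le) hxl
  simp only [sub_mul, sum_sub_distrib]
  linarith

lemma mul_DF_sub_DF_le_of_mix {q : Fin A → ℝ} {c c' : ℝ} (hc : 0 < c) (hcc' : c ≤ c')
    (hs : ∀ a, 0 ≤ s a) (hp : ∀ a, 0 < p a) (hq : ∀ a, 0 < q a) :
    c * (DF s p - DF s q) ≤ c' * (DF s p - DF s ((c / c') • q + (1 - c / c') • p)) := by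
  have hc' : 0 < c' := hc.trans_le hcc'
  have hconv := (convexOn_DF_right hs).2 hq hp (div_nonneg hc.le hc'.le)
    (sub_nonneg.2 (div_le_one_of_le₀ hcc' hc'.le)) (add_sub_cancel _ _)
  simp only [smul_eq_mul] at hconv
  calc c * (DF s p - DF s q)
      = c' * (DF s p - (c / c' * DF s q + (1 - c / c') * DF s p)) := by field_simp; ring
    _ ≤ _ := by gcongr

lemma weighted_regret_le_potential_sub {η' w w' : ℝ} (hη : 0 < η) (hη' : 0 < η') (hw : 0 < w)
    (hw' : 0 < w') (hβ : η' * w / (η * w') ≤ 1) (hl : ∀ a, 0 ≤ l a) (hp : ∀ a, 0 < p a)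
    (hx : x ∈ openSimplex A) (hxl : ∀ a, x a * l a ≤ 1) (hs : s ∈ simplex A) :
    w * ∑ a, (x a - s a) * l a ≤
      w' / η' * (DF s p - DF s ((η' * w / (η * w')) • entropicProj (expWeights η l x)
        + (1 - η' * w / (η * w')) • p)) - w / η * (DF s p - DF s x)
        + 1 / 2 * (η * w * ∑ a, l a) := by
  have := nonempty_of_mem_simplex hs
  have hβ_eq : η' * w / (η * w') = (w / η) / (w' / η') := by field_simp
  have hmono : w / η ≤ w' / η' := by
    rwa [hβ_eq, div_le_one (by positivity)] at hβ
  have hmix := mul_DF_sub_DF_le_of_mix (by positivity) hmono hs.1 hp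
    (entropicProj_mem_openSimplex (expWeights_pos (η := η) (l := l) hx.1)).1
  have hstep := mul_le_mul_of_nonneg_left
    (mul_regret_le_DF_sub_DF_entropicProj hη.le hl hx hxl hs) (div_nonneg hw.le hη.le)
  have hregret : w / η * (η * ∑ a, (x a - s a) * l a) = w * ∑ a, (x a - s a) * l a := by
    field_simp
  have hquad : w / η * (η ^ 2 / 2 * ∑ a, l a) = 1 / 2 * (η * w * ∑ a, l a) := by field_simp
  rw [hregret, mul_add, hquad] at hstep
  rw [hβ_eq]
  linarith

lemma mirrorDescent_mem_openSimplex {T : ℕ} {η β : ℕ → ℝ} {l θ θ' : ℕ → Fin A → ℝ}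
    (hβ : ∀ i ∈ Icc 1 T, 0 ≤ β i ∧ β i ≤ 1) (hθ1 : θ 1 ∈ openSimplex A)
    (hθ' : ∀ i ∈ Icc 1 T, θ' (i + 1) ∈ simplex A ∧
      IsMinOn (fun u => DF u (expWeights (η i) (l i) (θ i))) (simplex A) (θ' (i + 1)))
    (hθrec : ∀ i ∈ Icc 1 T, θ (i + 1) = β i • θ' (i + 1) + (1 - β i) • θ 1)
    {i : ℕ} (h1 : 1 ≤ i) (hi : i ≤ T + 1) : θ i ∈ openSimplex A := by
  have := nonempty_of_mem_simplex (openSimplex_subset_simplex hθ1)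
  induction i, h1 using Nat.le_induction with
  | base => exact hθ1
  | succ i h1 ih =>
    have hiT : i ∈ Icc 1 T := mem_Icc.2 ⟨h1, by omega⟩
    have hpos := expWeights_pos (η := η i) (l := l i) (ih (by omega)).1
    rw [hθrec i hiT, eq_entropicProj_of_isMinOn hpos (hθ' i hiT).1 (hθ' i hiT).2]
    exact convex_openSimplex (entropicProj_mem_openSimplex hpos) hθ1 (hβ i hiT).1
      (sub_nonneg.2 (hβ i hiT).2) (add_sub_cancel _ _)

end MirrorDescent

theorem stmt13_general (A T : ℕ) (η w : ℕ → ℝ)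
    (hη : ∀ i ∈ Icc 1 (T + 1), 0 < η i)
    (hw : ∀ i ∈ Icc 1 (T + 1), 0 < w i)
    (hβ : ∀ i ∈ Icc 1 T, η (i + 1) * w i / (η i * w (i + 1)) ≤ 1)
    (lhat : ℕ → Fin A → ℝ) (hl : ∀ i ∈ Icc 1 T, ∀ a, 0 ≤ lhat i a)
    (θ θ' : ℕ → Fin A → ℝ)
    (hθ1 : θ 1 ∈ openSimplex A)
    (hθ' : ∀ i ∈ Icc 1 T, θ' (i + 1) ∈ simplex A ∧
      IsMinOn (fun u => DF u (expWeights (η i) (lhat i) (θ i))) (simplex A) (θ' (i + 1)))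
    (hθrec : ∀ i ∈ Icc 1 T,
      θ (i + 1) = (η (i + 1) * w i / (η i * w (i + 1))) • θ' (i + 1)
        + (1 - η (i + 1) * w i / (η i * w (i + 1))) • θ 1)
    (hbd : ∀ i ∈ Icc 1 T, ∀ a, θ i a * lhat i a ≤ 1)
    (θs : Fin A → ℝ) (hθs : θs ∈ simplex A) (t : ℕ) (ht : t ≤ T) :
    ∑ i ∈ Icc 1 t, w i * ∑ a, (θ i a - θs a) * lhat i a ≤
      w (t + 1) * DF θs (θ 1) / η (t + 1)
        + (1 / 2) * ∑ i ∈ Icc 1 t, η i * w i * ∑ a, lhat i a := by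
  have hη_pos {i} (h1 : 1 ≤ i) (hi : i ≤ T + 1) : 0 < η i := hη i (mem_Icc.2 ⟨h1, hi⟩)
  have hw_pos {i} (h1 : 1 ≤ i) (hi : i ≤ T + 1) : 0 < w i := hw i (mem_Icc.2 ⟨h1, hi⟩)
  have hβ_nonneg : ∀ i ∈ Icc 1 T, 0 ≤ η (i + 1) * w i / (η i * w (i + 1)) := by
    intro i hi
    obtain ⟨h1, hiT⟩ := mem_Icc.1 hi
    exact div_nonneg (mul_pos (hη_pos (by omega) (by omega)) (hw_pos h1 (by omega))).le
      (mul_pos (hη_pos h1 (by omega)) (hw_pos (by omega) (by omega))).le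
  have hθ_mem {i} (h1 : 1 ≤ i) (hi : i ≤ T + 1) : θ i ∈ openSimplex A :=
    mirrorDescent_mem_openSimplex (fun i hi => ⟨hβ_nonneg i hi, hβ i hi⟩) hθ1 hθ' hθrec h1 hi
  let Φ : ℕ → ℝ := fun i => w i / η i * (DF θs (θ 1) - DF θs (θ i))
  have hround : ∀ i ∈ Icc 1 t, w i * ∑ a, (θ i a - θs a) * lhat i a ≤
      (Φ (i + 1) - Φ i) + 1 / 2 * (η i * w i * ∑ a, lhat i a) := by
    intro i hi
    obtain ⟨h1, hit⟩ := mem_Icc.1 hi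
    have hiT : i ∈ Icc 1 T := mem_Icc.2 ⟨h1, by omega⟩
    have hpos := hθ_mem h1 (by omega)
    simp only [Φ]
    rw [hθrec i hiT,
      eq_entropicProj_of_isMinOn (expWeights_pos hpos.1) (hθ' i hiT).1 (hθ' i hiT).2]
    exact weighted_regret_le_potential_sub (hη_pos h1 (by omega)) (hη_pos (by omega) (by omega))
      (hw_pos h1 (by omega)) (hw_pos (by omega) (by omega)) (hβ i hiT) (hl i hiT) hθ1.1 hpos
      (hbd i hiT) hθs
  have htelescope : ∑ i ∈ Icc 1 t, (Φ (i + 1) - Φ i) = Φ (t + 1) := by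
    rw [← Ico_add_one_right_eq_Icc, sum_Ico_sub Φ (by omega)]
    simp [Φ]
  have hΦ_le : Φ (t + 1) ≤ w (t + 1) * DF θs (θ 1) / η (t + 1) := by
    have hDF := DF_nonneg hθs.1 (hθ_mem (i := t + 1) (by omega) (by omega)).1
    rw [mul_div_right_comm]
    exact mul_le_mul_of_nonneg_left (sub_le_self _ hDF)
      (div_pos (hw_pos (by omega) (by omega)) (hη_pos (by omega) (by omega))).le
  have hsum := sum_le_sum hround
  rw [sum_add_distrib, htelescope, ← mul_sum] at hsum
  linarith

/-- Deterministic core of the high-probability OMD regret bound. -/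
theorem stmt13 (A : ℕ) (hA : 1 ≤ A) (T : ℕ) (hT : 1 ≤ T)
    (η w : ℕ → ℝ)
    (hη : ∀ i ∈ Finset.Icc 1 (T + 1), 0 < η i)
    (hw : ∀ i ∈ Finset.Icc 1 (T + 1), 0 < w i)
    (hβ : ∀ i ∈ Finset.Icc 1 T,
      0 < η (i + 1) * w i / (η i * w (i + 1)) ∧ η (i + 1) * w i / (η i * w (i + 1)) ≤ 1)
    (lhat : ℕ → Fin A → ℝ) (hl : ∀ i ∈ Finset.Icc 1 T, ∀ a, 0 ≤ lhat i a)
    (θ θtil θ' : ℕ → Fin A → ℝ)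
    (hθ1 : ∀ a, θ 1 a = 1 / A)
    (hθtil : ∀ i ∈ Finset.Icc 1 T, ∀ a,
      θtil (i + 1) a = θ i a * Real.exp (-(η i) * lhat i a))
    (hθ' : ∀ i ∈ Finset.Icc 1 T, θ' (i + 1) ∈ simplex A ∧
      ∀ u ∈ simplex A, DF (θ' (i + 1)) (θtil (i + 1)) ≤ DF u (θtil (i + 1)))
    (hθrec : ∀ i ∈ Finset.Icc 1 T,
      θ (i + 1) = (η (i + 1) * w i / (η i * w (i + 1))) • θ' (i + 1)
        + (1 - η (i + 1) * w i / (η i * w (i + 1))) • θ 1)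
    (ai : ℕ → Fin A)
    (hsupp : ∀ i ∈ Finset.Icc 1 T, ∀ a, a ≠ ai i → lhat i a = 0)
    (hbd : ∀ i ∈ Finset.Icc 1 T, θ i (ai i) * lhat i (ai i) ≤ 1) :
    ∀ θs ∈ simplex A, ∀ t ∈ Finset.Icc 1 T,
      (∑ i ∈ Finset.Icc 1 t, w i * ∑ a, (θ i a - θs a) * lhat i a) ≤
        w (t + 1) * Real.log A / η (t + 1)
          + (1 / 2) * ∑ i ∈ Finset.Icc 1 t, η i * w i * ∑ a, lhat i a := by
  intro θs hθs t ht
  have hθ1_eq : θ 1 = fun _ => 1 / (A : ℝ) := funext hθ1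
  have hbd_all : ∀ i ∈ Icc 1 T, ∀ a, θ i a * lhat i a ≤ 1 := by
    intro i hi a
    rcases eq_or_ne a (ai i) with rfl | ha
    · exact hbd i hi
    · simp [hsupp i hi a ha]
  have ht_succ : t + 1 ∈ Icc 1 (T + 1) := by simp_all
  refine (stmt13_general A T η w hη hw (fun i hi => (hβ i hi).2) lhat hl θ θ'
    (hθ1_eq ▸ uniform_mem_openSimplex (by omega))
    (fun i hi => (funext (hθtil i hi) : _ = expWeights _ _ _) ▸ hθ' i hi)
    hθrec hbd_all θs hθs t (mem_Icc.1 ht).2).trans ?_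
  have hw_nonneg := (hw _ ht_succ).le
  have hη_nonneg := (hη _ ht_succ).le
  gcongr
  exact hθ1_eq ▸ DF_uniform_le_log hθs
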